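/- For every n ≥ 2 and every optimal set α_n of n-means for P, each c ∈ α_n equals a(τ) = S_τ(2/3) for some word τ ∈ {1,2}*; i.e., every optimal quantizer point is the conditional expectation of X on some cylinder set J_τ. -/

import Mathlib

open MeasureTheory Set
open scoped ENNReal Classical

noncomputable section

/-- The similarity map `S₁(x) = x/4`. -/
def S1 (x : ℝ) : ℝ := x / 4

/-- The similarity map `S₂(x) = x/2 + 1/2`. -/
def S2 (x : ℝ) : ℝ := x / 2 + 1 / 2

/-- `P` satisfies the self-similarity relation `P = (1/4)·P∘S₁⁻¹ + (3/4)·P∘S₂⁻¹`. -/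
def SelfSimilar (P : Measure ℝ) : Prop :=
  P = (1/4 : ℝ≥0∞) • P.map S1 + (3/4 : ℝ≥0∞) • P.map S2

/-- For a word `σ` over `{1,2}` (encoded as `Fin 2`, `0 ↦ S₁`, `1 ↦ S₂`),
the composition `S_σ = S_{σ₁} ∘ ⋯ ∘ S_{σ_k}`. -/
def Sw : List (Fin 2) → ℝ → ℝ
  | [] => id
  | i :: σ => (if i = 0 then S1 else S2) ∘ Sw σ

/-- `p_σ`, the product of the probabilities `p₁ = 1/4`, `p₂ = 3/4` along `σ`. -/
def pw : List (Fin 2) → ℝ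
  | [] => 1
  | i :: σ => (if i = 0 then (1:ℝ)/4 else 3/4) * pw σ

/-- `s_σ`, the product of the contraction ratios `s₁ = 1/4`, `s₂ = 1/2` along `σ`. -/
def sw : List (Fin 2) → ℝ
  | [] => 1
  | i :: σ => (if i = 0 then (1:ℝ)/4 else 1/2) * sw σ

/-- `c(σ)`, the number of occurrences of the symbol `1` (encoded `0`) in `σ`. -/
def cnt (σ : List (Fin 2)) : ℕ := σ.count 0

/-- The cylinder interval `J_σ = S_σ([0,1])`. -/
def J (σ : List (Fin 2)) : Set ℝ := Sw σ '' Set.Icc 0 1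

/-- The distortion error `V(P;α) = ∫ min_{a ∈ α} (x-a)² dP`. -/
def distortion (P : Measure ℝ) (α : Finset ℝ) : ℝ :=
  ∫ x, sInf ((fun a => (x - a) ^ 2) '' (α : Set ℝ)) ∂P

/-- The `n`-th quantization error `V_n`. -/
def qError (P : Measure ℝ) (n : ℕ) : ℝ :=
  sInf {e | ∃ α : Finset ℝ, α.Nonempty ∧ α.card ≤ n ∧ e = distortion P α}

/-- `α` is an optimal set of `n`-means for `P`. -/
def IsOptimal (P : Measure ℝ) (n : ℕ) (α : Finset ℝ) : Prop :=
  α.Nonempty ∧ α.card ≤ n ∧ distortion P α = qError P n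

/-- `q_σ := P(J_σ) · λ(J_σ)²`. -/
def qnt (P : Measure ℝ) (σ : List (Fin 2)) : ℝ :=
  (P (J σ)).toReal * ((volume (J σ)).toReal) ^ 2

/-!
The gap between `J₁ = [0, 1/4]` and `J₂ = [1/2, 1]` separates the two self-similar halves of `P`.
If some boundary between Voronoi cells of an optimal set `α` lies in the closed gap, then `α` is
the union of a part serving `J₁` and a part serving `J₂`; by self-similarity these are images under
`S₁` and `S₂` of smaller optimal sets, and induction on the number of points applies, starting from
the mean `2/3` for a single point.

Otherwise one cell contains the gap in its interior. Reflecting its centre in the two ends of the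
gap bounds the cost on `J₁` and `J₂₁` from below by more than `19/1024 · V₁`. For `n ≥ 3` the
cylinder `J₂₂` has weight `9/16` and ratio `1/4` and is served by at most `n - 2` points, so that
the cost exceeds `19/1024 · V₁ + 9/256 · V_{n-2}`. But this is at least `V_n`, since one point each
for `J₁` and `J₂₁` and `n - 2` points for `J₂₂` achieve it. For `n = 2` the cost of a pair with a
given midpoint is controlled by the truncated moments `E(t - X)⁺` and `E(X - t)⁺`.
-/

open ProbabilityTheory Filter Topology

/-! ### Two facts about general measures -/

section GeneralMeasure

theorem ae_nonpos_of_comp_le_mul {X ι : Type*} [MeasurableSpace X] [Fintype ι] {μ : Measure X}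
    [IsFiniteMeasure μ] {w : ι → ℝ≥0∞} {S : ι → X → X} {φ : X → ℝ} {r : ℝ}
    (hμ : μ = ∑ i, w i • μ.map (S i)) (hw : ∑ i, w i ≤ 1) (hS : ∀ i, Measurable (S i))
    (hφ : Measurable φ) (hr₀ : 0 < r) (hr₁ : r < 1) (hφS : ∀ i x, φ (S i x) ≤ r * φ x) :
    ∀ᵐ x ∂μ, φ x ≤ 0 := by
  have tail_le (R : ℝ) : μ {x | R < φ x} ≤ μ {x | R / r < φ x} := by
    have hR : MeasurableSet {x | R < φ x} := measurableSet_lt measurable_const hφ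
    calc μ {x | R < φ x} = ∑ i, w i * μ (S i ⁻¹' {x | R < φ x}) := by
          conv_lhs => rw [hμ]
          simp only [Measure.coe_finsetSum, Finset.sum_apply, Measure.smul_apply, smul_eq_mul,
            Measure.map_apply (hS _) hR]
      _ ≤ ∑ i, w i * μ {x | R / r < φ x} := by
          gcongr with i
          exact fun x (hx : R < φ (S i x)) => (div_lt_iff₀' hr₀).2 (hx.trans_le (hφS i x))
      _ ≤ μ {x | R / r < φ x} := by
          rw [← Finset.sum_mul]
          exact mul_le_of_le_one_left' hw
  have tail_le_iterate (R : ℝ) (k : ℕ) : μ {x | R < φ x} ≤ μ {x | R / r ^ k < φ x} := by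
    induction k with
    | zero => simp
    | succ k ih => exact ih.trans ((tail_le _).trans_eq (by rw [div_div, ← pow_succ]))
  have tail_eq_zero {R : ℝ} (hR : 0 < R) : μ {x | R < φ x} = 0 := by
    have hlim := tendsto_measure_iInter_atTop (μ := μ) (s := fun k : ℕ => {x | R / r ^ k < φ x})
      (fun k => (measurableSet_lt measurable_const hφ).nullMeasurableSet)
      (fun i j hij x (hx : R / r ^ j < φ x) => (div_le_div_of_nonneg_left hR.le (pow_pos hr₀ j)
        (pow_le_pow_of_le_one hr₀.le hr₁.le hij)).trans_lt hx)
      ⟨0, measure_ne_top _ _⟩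
    have hempty : ⋂ k : ℕ, {x | R / r ^ k < φ x} = ∅ := by
      refine eq_empty_of_forall_notMem fun x hx => ?_
      obtain ⟨k, hk⟩ := pow_unbounded_of_one_lt (φ x / R) ((one_lt_inv₀ hr₀).2 hr₁)
      have hlt : R / r ^ k < φ x := mem_iInter.1 hx k
      rw [div_lt_iff₀ hR, inv_pow, inv_mul_eq_div] at hk
      exact hlt.not_gt hk
    rw [hempty, measure_empty] at hlim
    exact le_antisymm (ge_of_tendsto' hlim (tail_le_iterate R)) bot_le
  have hle (k : ℕ) : ∀ᵐ x ∂μ, φ x ≤ 1 / ((k : ℝ) + 1) := by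
    simpa only [ae_iff, not_le] using tail_eq_zero Nat.one_div_pos_of_nat
  filter_upwards [ae_all_iff.2 hle] with x hx
  exact ge_of_tendsto' tendsto_one_div_add_atTop_nhds_zero_nat hx

theorem integral_sq_sub_const {Ω : Type*} [MeasurableSpace Ω] {μ : Measure Ω}
    [IsProbabilityMeasure μ] {X : Ω → ℝ} (hX : MemLp X 2 μ) (c : ℝ) :
    ∫ ω, (X ω - c) ^ 2 ∂μ = Var[X; μ] + (μ[X] - c) ^ 2 := by
  have hvar : Var[fun ω => X ω - c; μ] = ∫ ω, (X ω - c) ^ 2 ∂μ - (∫ ω, (X ω - c) ∂μ) ^ 2 :=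
    variance_eq_sub (hX.sub (memLp_const c))
  have hmean : ∫ ω, (X ω - c) ∂μ = μ[X] - c := by
    rw [integral_sub (hX.integrable one_le_two) (integrable_const c)]
    simp
  rw [hmean, variance_sub_const hX.aestronglyMeasurable] at hvar
  exact sub_eq_iff_eq_add.1 hvar.symm

end GeneralMeasure

/-! ### Squared distance to a finite set -/

/-- The squared distance from `x` to the finite set `α`, which is the integrand of `distortion`;
like that integrand, it is `0` for `α = ∅`. -/
def sqInfDist (α : Finset ℝ) (x : ℝ) : ℝ := sInf ((fun a => (x - a) ^ 2) '' (α : Set ℝ))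

section SqInfDist

variable {α β : Finset ℝ} {a b c x : ℝ}

theorem le_sqInfDist_iff (hα : α.Nonempty) : c ≤ sqInfDist α x ↔ ∀ a ∈ α, c ≤ (x - a) ^ 2 :=
  (le_csInf_iff (α.finite_toSet.image _).bddBelow (hα.to_set.image _)).trans forall_mem_image

theorem sqInfDist_le (ha : a ∈ α) : sqInfDist α x ≤ (x - a) ^ 2 :=
  (le_sqInfDist_iff ⟨a, ha⟩).1 le_rfl a ha

theorem sqInfDist_nonneg : 0 ≤ sqInfDist α x :=
  Real.sInf_nonneg (forall_mem_image.2 fun _ _ => sq_nonneg _)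

theorem continuous_sqInfDist (hα : α.Nonempty) : Continuous (sqInfDist α) := by
  have h : sqInfDist α = fun x => α.inf' hα fun a => (x - a) ^ 2 :=
    funext fun x => (Finset.inf'_eq_csInf_image α hα _).symm
  rw [h]
  exact Continuous.finset_inf'_apply hα fun a _ => by fun_prop

theorem sqInfDist_singleton : sqInfDist {a} x = (x - a) ^ 2 := by
  simp [sqInfDist]

theorem sqInfDist_anti (hα : α.Nonempty) (h : α ⊆ β) : sqInfDist β x ≤ sqInfDist α x :=
  (le_sqInfDist_iff hα).2 fun _ ha => sqInfDist_le (h ha)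

theorem sqInfDist_filter_le {p : ℝ → Prop} [DecidablePred p] (ha : a ∈ α) (hpa : p a)
    (h : ∀ b ∈ α, ¬p b → (x - a) ^ 2 ≤ (x - b) ^ 2) :
    sqInfDist (α.filter p) x ≤ sqInfDist α x := by
  refine (le_sqInfDist_iff ⟨a, ha⟩).2 fun b hb => ?_
  by_cases hpb : p b
  · exact sqInfDist_le (Finset.mem_filter.2 ⟨hb, hpb⟩)
  · exact (sqInfDist_le (Finset.mem_filter.2 ⟨ha, hpa⟩)).trans (h b hb hpb)

theorem sqInfDist_pair (hab : a ≤ b) :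
    sqInfDist {a, b} x = (x - b) ^ 2 - 2 * (b - a) * max ((a + b) / 2 - x) 0 := by
  rw [sqInfDist, Finset.coe_pair, image_pair, csInf_pair]
  rcases le_total x ((a + b) / 2) with h | h
  · rw [max_eq_left (by linarith), inf_of_le_left (by nlinarith)]
    ring
  · rw [max_eq_right (by linarith), inf_of_le_right (by nlinarith)]
    ring

theorem sqInfDist_image {f : ℝ → ℝ} {r : ℝ} (hf : ∀ x y, f x - f y = r * (x - y)) :
    sqInfDist (α.image f) (f x) = r ^ 2 * sqInfDist α x := by
  have hcomp : (fun b => (f x - b) ^ 2) ∘ f = (fun y => r ^ 2 • y) ∘ fun a => (x - a) ^ 2 :=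
    funext fun a => by simp [hf, mul_pow]
  rw [sqInfDist, Finset.coe_image, ← image_comp, hcomp, image_comp, sqInfDist, ← smul_eq_mul,
    ← Real.sInf_smul_of_nonneg (sq_nonneg r)]
  rfl

end SqInfDist

section Distortion

variable {μ : Measure ℝ} {α β : Finset ℝ} {a b : ℝ} {n : ℕ}

theorem distortion_nonneg : 0 ≤ distortion μ α :=
  integral_nonneg fun _ => sqInfDist_nonneg

theorem distortion_singleton [IsProbabilityMeasure μ] (hμ : MemLp id 2 μ) :
    distortion μ {a} = Var[id; μ] + (μ[id] - a) ^ 2 := by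
  rw [← integral_sq_sub_const hμ]
  exact integral_congr_ae (.of_forall fun _ => sqInfDist_singleton)

theorem integral_max_sub_const_eq [IsProbabilityMeasure μ] (hμ : Integrable id μ) (t : ℝ) :
    ∫ x, max (x - t) 0 ∂μ = ∫ x, max (t - x) 0 ∂μ + (μ[id] - t) := by
  have hmax (x : ℝ) : max (x - t) 0 = max (t - x) 0 + (id x - t) := by
    have h := max_zero_sub_eq_self (x - t)
    rw [neg_sub] at h
    rw [id]
    linarith
  have hsub : Integrable (fun x => t - x) μ := (integrable_const t).sub hμ
  simp_rw [hmax]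
  have hadd : ∫ x, (max (t - x) 0 + (id x - t)) ∂μ
      = ∫ x, max (t - x) 0 ∂μ + ∫ x, (id x - t) ∂μ :=
    integral_add hsub.pos_part (hμ.sub (integrable_const t))
  rw [hadd, integral_sub hμ (integrable_const t)]
  simp

/- Minimising over `b` with the midpoint `t` fixed: the defect is `(μ[id] - b + 2 E(t - X)⁺)²`. -/
theorem variance_sub_le_distortion_pair [IsProbabilityMeasure μ] (hμ : MemLp id 2 μ) (hab : a ≤ b) :
    Var[id; μ] - 4 * ((∫ x, max ((a + b) / 2 - x) 0 ∂μ) * ∫ x, max (x - (a + b) / 2) 0 ∂μ)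
      ≤ distortion μ {a, b} := by
  have hint : Integrable id μ := hμ.integrable one_le_two
  have hmax : Integrable (fun x => max ((a + b) / 2 - x) 0) μ :=
    ((integrable_const _).sub hint).pos_part
  have hsq : Integrable (fun x => (x - b) ^ 2) μ := (hμ.sub (memLp_const b)).integrable_sq
  have hpair : distortion μ {a, b} = Var[id; μ] + (μ[id] - b) ^ 2
      - 2 * (b - a) * ∫ x, max ((a + b) / 2 - x) 0 ∂μ := by
    calc distortion μ {a, b}
        = ∫ x, ((x - b) ^ 2 - 2 * (b - a) * max ((a + b) / 2 - x) 0) ∂μ :=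
          integral_congr_ae (.of_forall fun _ => sqInfDist_pair hab)
      _ = ∫ x, (id x - b) ^ 2 ∂μ - 2 * (b - a) * ∫ x, max ((a + b) / 2 - x) 0 ∂μ := by
          rw [integral_sub hsq (hmax.const_mul _), integral_const_mul]
          rfl
      _ = _ := by rw [integral_sq_sub_const hμ]
  rw [hpair, integral_max_sub_const_eq hint]
  nlinarith [sq_nonneg (μ[id] - b + 2 * ∫ x, max ((a + b) / 2 - x) 0 ∂μ)]

theorem qError_le_distortion (hα : α.Nonempty) (hn : α.card ≤ n) :
    qError μ n ≤ distortion μ α :=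
  csInf_le ⟨0, by rintro _ ⟨β, -, -, rfl⟩; exact distortion_nonneg⟩ ⟨α, hα, hn, rfl⟩

theorem le_qError {c : ℝ} (hn : 1 ≤ n)
    (h : ∀ β : Finset ℝ, β.Nonempty → β.card ≤ n → c ≤ distortion μ β) : c ≤ qError μ n := by
  refine le_csInf ⟨_, {0}, Finset.singleton_nonempty 0, by simpa using hn, rfl⟩ ?_
  rintro _ ⟨β, hβ, hβn, rfl⟩
  exact h β hβ hβn

theorem qError_anti {m : ℕ} (hm : 1 ≤ m) (hmn : m ≤ n) : qError μ n ≤ qError μ m :=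
  le_qError hm fun _ hβ hβm => qError_le_distortion hβ (hβm.trans hmn)

theorem IsOptimal.isOptimal_card (hα : IsOptimal μ n α) : IsOptimal μ α.card α := by
  obtain ⟨hne, hcard, heq⟩ := hα
  exact ⟨hne, le_rfl, le_antisymm (heq.trans_le (qError_anti hne.card_pos hcard))
    (qError_le_distortion hne le_rfl)⟩

end Distortion

/-! ### Voronoi cells and intervals -/

/-- The Voronoi cell of `h ∈ α` contains the interval `[l, r]` in its interior, that is, no midpoint
between `h` and another point of `α` separates `h` from a point of `[l, r]`. -/
structure Straddles (α : Finset ℝ) (h l r : ℝ) : Prop where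
  mem : h ∈ α
  add_lt : ∀ a ∈ α, a < h → a + h < 2 * l
  lt_add : ∀ b ∈ α, h < b → 2 * r < h + b

/-- `α` is the disjoint union of the nonempty sets `A` and `B`, where `A` approximates the points of
`(-∞, l]` and `B` approximates the points of `[r, ∞)` as well as `α` does. -/
structure SplitsAcross (α A B : Finset ℝ) (l r : ℝ) : Prop where
  left_nonempty : A.Nonempty
  right_nonempty : B.Nonempty
  union_eq : A ∪ B = α
  card_add_card : A.card + B.card = α.card
  left_le : ∀ x ≤ l, sqInfDist A x ≤ sqInfDist α x
  right_le : ∀ x ≥ r, sqInfDist B x ≤ sqInfDist α x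

section Voronoi

variable {α : Finset ℝ} {h l r x : ℝ}

/- On the left of `l`, the reflection `2 * l - h` of `h` in `l` does better than all of `α`. -/
theorem Straddles.sq_sub_le_of_le (hs : Straddles α h l r) (hx : 2 * l - h ≤ x) (hxl : x ≤ l) :
    ∀ a ∈ α, (x - (2 * l - h)) ^ 2 ≤ (x - a) ^ 2 := fun a ha => by
  rcases lt_or_ge a h with hah | hah
  · nlinarith [hs.add_lt a ha hah]
  · nlinarith

theorem Straddles.sq_sub_le_of_ge (hs : Straddles α h l r) (hrx : r ≤ x) (hx : x ≤ 2 * r - h) :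
    ∀ a ∈ α, (x - (2 * r - h)) ^ 2 ≤ (x - a) ^ 2 := fun a ha => by
  rcases lt_or_ge h a with hha | hha
  · nlinarith [hs.lt_add a ha hha]
  · nlinarith

theorem splitsAcross_filter {p : ℝ → Prop} [DecidablePred p] {a b : ℝ} (ha : a ∈ α) (hb : b ∈ α)
    (hpa : p a) (hpb : ¬p b) (hleft : ∀ c ∈ α, p c → c ≤ b ∧ c + b ≤ 2 * r)
    (hright : ∀ c ∈ α, ¬p c → a ≤ c ∧ 2 * l ≤ a + c) :
    SplitsAcross α (α.filter p) (α.filter fun c => ¬p c) l r where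
  left_nonempty := ⟨a, Finset.mem_filter.2 ⟨ha, hpa⟩⟩
  right_nonempty := ⟨b, Finset.mem_filter.2 ⟨hb, hpb⟩⟩
  union_eq := Finset.filter_union_filter_not_eq p α
  card_add_card := Finset.card_filter_add_card_filter_not p
  left_le x hx := sqInfDist_filter_le ha hpa fun c hc hpc => by
    obtain ⟨hac, hlc⟩ := hright c hc hpc
    nlinarith
  right_le x hx := sqInfDist_filter_le hb hpb fun c hc hpc => by
    obtain ⟨hcb, hcr⟩ := hleft c hc (not_not.1 hpc)
    nlinarith

theorem exists_splitsAcross_or_straddles (hα : α.Nonempty) (hlr : l ≤ r) :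
    (∃ A B, SplitsAcross α A B l r) ∨ ∃ h, Straddles α h l r := by
  obtain ⟨h, hh, hmin⟩ := α.exists_min_image (fun a => (a - (l + r) / 2) ^ 2) hα
  have hlow (a : ℝ) (ha : a ∈ α) (hah : a < h) : a + h ≤ l + r := by nlinarith [hmin a ha]
  have hhigh (b : ℝ) (hb : b ∈ α) (hhb : h < b) : l + r ≤ h + b := by nlinarith [hmin b hb]
  by_cases hl : ∃ a ∈ α, a < h ∧ 2 * l ≤ a + h
  · obtain ⟨a, ha, hah, hal⟩ := hl
    refine .inl ⟨_, _, splitsAcross_filter (p := (· < h)) ha hh hah (lt_irrefl h)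
      (fun c hc hch => ?_) fun c _ hhc => ?_⟩
    · exact ⟨hch.le, by linarith [hlow c hc hch]⟩
    · constructor <;> linarith [not_lt.1 hhc]
  by_cases hr : ∃ b ∈ α, h < b ∧ h + b ≤ 2 * r
  · obtain ⟨b, hb, hhb, hbr⟩ := hr
    refine .inl ⟨_, _, splitsAcross_filter (p := (· ≤ h)) hh hb le_rfl hhb.not_ge
      (fun c _ hch => ?_) fun c hc hhc => ?_⟩
    · constructor <;> linarith
    · exact ⟨(not_le.1 hhc).le, by linarith [hhigh c hc (not_le.1 hhc)]⟩
  push Not at hl hr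
  exact .inr ⟨h, hh, hl, hr⟩

end Voronoi

/-! ### The similarities along a word -/

section Words

variable (σ τ : List (Fin 2)) (x y : ℝ)

theorem Sw_append : Sw (σ ++ τ) = Sw σ ∘ Sw τ := by
  induction σ with
  | nil => rfl
  | cons i σ ih => rw [List.cons_append, Sw, Sw, ih, Function.comp_assoc]

theorem sw_pos : 0 < sw τ := by
  induction τ with
  | nil => exact one_pos
  | cons i τ ih => exact mul_pos (by split_ifs <;> norm_num) ih

theorem Sw_sub_Sw : Sw τ x - Sw τ y = sw τ * (x - y) := by
  induction τ with
  | nil => simp [Sw, sw]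
  | cons i τ ih =>
    simp only [Sw, sw, Function.comp_apply, mul_assoc, ← ih]
    split_ifs <;> simp only [S1, S2] <;> ring

theorem Sw_eq : Sw τ x = sw τ * x + Sw τ 0 := by
  linarith [Sw_sub_Sw τ x 0]

theorem continuous_Sw : Continuous (Sw τ) := by
  rw [funext (Sw_eq τ)]
  fun_prop

theorem Sw_bijective : Function.Bijective (Sw τ) := by
  rw [funext (Sw_eq τ)]
  exact (Equiv.addRight (Sw τ 0)).bijective.comp (mulLeft_bijective₀ _ (sw_pos τ).ne')

theorem exists_image_Sw_eq (A : Finset ℝ) : ∃ A' : Finset ℝ, A'.image (Sw τ) = A :=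
  ⟨_, Finset.image_preimage_of_bijective A (Sw_bijective τ)⟩

theorem card_image_Sw (A : Finset ℝ) : (A.image (Sw τ)).card = A.card :=
  Finset.card_image_of_injective A (Sw_bijective τ).injective

theorem J_subset_Icc : J τ ⊆ Icc (Sw τ 0) (Sw τ 1) := by
  rintro _ ⟨x, ⟨hx₀, hx₁⟩, rfl⟩
  have hτ := sw_pos τ
  rw [Sw_eq τ x, Sw_eq τ 1]
  constructor <;> nlinarith

end Words

/-- The conditional distortion `E(min_{a ∈ α} (X - a)² | X ∈ J_τ)`: under a self-similar measure
the conditional law of `X` on the cylinder `J_τ` is the law of `S_τ(X)`. -/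
def condDistortion (P : Measure ℝ) (α : Finset ℝ) (τ : List (Fin 2)) : ℝ :=
  ∫ x, sqInfDist α (Sw τ x) ∂P

section CondDistortion

variable {P : Measure ℝ} {α : Finset ℝ} {τ : List (Fin 2)}

theorem condDistortion_nonneg : 0 ≤ condDistortion P α τ :=
  integral_nonneg fun _ => sqInfDist_nonneg

theorem condDistortion_image : condDistortion P (α.image (Sw τ)) τ = sw τ ^ 2 * distortion P α := by
  simp_rw [condDistortion, sqInfDist_image (Sw_sub_Sw τ), integral_const_mul]
  rfl

end CondDistortion

/-! ### Integration against the self-similar measure -/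

namespace SelfSimilar

variable {P : Measure ℝ} (hP : SelfSimilar P)
include hP

section Integration

variable [IsFiniteMeasure P] {f g : ℝ → ℝ}

theorem ae_mem_Icc : ∀ᵐ x ∂P, x ∈ Icc (0 : ℝ) 1 := by
  have hcontr (i : Fin 2) (x : ℝ) :
      max (max (-![S1, S2] i x) (![S1, S2] i x - 1)) 0 ≤ 1 / 2 * max (max (-x) (x - 1)) 0 := by
    have h₁ : -x ≤ max (max (-x) (x - 1)) 0 := (le_max_left _ _).trans (le_max_left _ _)
    have h₂ : x - 1 ≤ max (max (-x) (x - 1)) 0 := (le_max_right _ _).trans (le_max_left _ _)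
    have h₃ : 0 ≤ max (max (-x) (x - 1)) 0 := le_max_right _ _
    fin_cases i <;> refine max_le (max_le ?_ ?_) (by linarith) <;> dsimp [S1, S2] <;> linarith
  have hsum : ∑ i, ![(1 / 4 : ℝ≥0∞), 3 / 4] i = 1 := by
    rw [Fin.sum_univ_two]
    simp only [Matrix.cons_val_zero, Matrix.cons_val_one, ← ENNReal.add_div]
    rw [show (1 : ℝ≥0∞) + 3 = 4 by norm_num]
    exact ENNReal.div_self (by norm_num) (by norm_num)
  have hmeas (i : Fin 2) : Measurable (![S1, S2] i) := by
    fin_cases i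
    · exact (continuous_Sw [0]).measurable
    · exact (continuous_Sw [1]).measurable
  have hae := ae_nonpos_of_comp_le_mul (w := ![1 / 4, 3 / 4]) (S := ![S1, S2]) (r := 1 / 2)
    (φ := fun x => max (max (-x) (x - 1)) 0) (by rw [Fin.sum_univ_two]; exact hP) hsum.le hmeas
    (by fun_prop) (by norm_num) (by norm_num) hcontr
  filter_upwards [hae] with x hx
  have hx' := max_le_iff.1 (max_le_iff.1 hx).1
  exact ⟨by linarith [hx'.1], by linarith [hx'.2]⟩

theorem memLp (hf : Continuous f) (p : ℝ≥0∞) : MemLp f p P := by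
  obtain ⟨C, hC⟩ := isCompact_Icc.exists_bound_of_continuousOn (hf.continuousOn (s := Icc 0 1))
  exact .of_bound hf.aestronglyMeasurable C (hP.ae_mem_Icc.mono hC)

theorem integrable (hf : Continuous f) : Integrable f P :=
  memLp_one_iff_integrable.1 (hP.memLp hf 1)

theorem integral_mono (hf : Continuous f) (hg : Continuous g) (h : ∀ x ∈ Icc 0 1, f x ≤ g x) :
    ∫ x, f x ∂P ≤ ∫ x, g x ∂P :=
  integral_mono_ae (hP.integrable hf) (hP.integrable hg) (hP.ae_mem_Icc.mono h)

theorem integral_eq (hf : Continuous f) :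
    ∫ x, f x ∂P = 1 / 4 * ∫ x, f (Sw [0] x) ∂P + 3 / 4 * ∫ x, f (Sw [1] x) ∂P := by
  have hint (i : Fin 2) : Integrable f (P.map (Sw [i])) :=
    (integrable_map_measure hf.aestronglyMeasurable (continuous_Sw _).aemeasurable).2
      (hP.integrable (hf.comp (continuous_Sw _)))
  have hmap (i : Fin 2) : ∫ x, f x ∂P.map (Sw [i]) = ∫ x, f (Sw [i] x) ∂P :=
    integral_map (continuous_Sw _).aemeasurable hf.aestronglyMeasurable
  have hP' : P = (1 / 4 : ℝ≥0∞) • P.map (Sw [0]) + (3 / 4 : ℝ≥0∞) • P.map (Sw [1]) := hP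
  conv_lhs => rw [hP']
  rw [integral_add_measure ((hint 0).smul_measure (ENNReal.div_ne_top (by simp) (by simp)))
      ((hint 1).smul_measure (ENNReal.div_ne_top (by simp) (by simp))),
    integral_smul_measure, integral_smul_measure, hmap, hmap]
  simp

end Integration

section Moments

variable [IsProbabilityMeasure P]

theorem integral_Sw (τ : List (Fin 2)) : P[Sw τ] = Sw τ P[id] := by
  have hid : Integrable (fun x => sw τ * id x) P := hP.integrable (by fun_prop)
  rw [Sw_eq, funext (Sw_eq τ), ← integral_const_mul]
  exact (integral_add hid (integrable_const _)).trans (by simp)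

theorem mean_eq : P[id] = 2 / 3 := by
  have h : P[id] = 1 / 4 * P[Sw [0]] + 3 / 4 * P[Sw [1]] := hP.integral_eq continuous_id
  rw [hP.integral_Sw, hP.integral_Sw] at h
  change P[id] = 1 / 4 * (P[id] / 4) + 3 / 4 * (P[id] / 2 + 1 / 2) at h
  linarith

theorem integral_sq_Sw (τ : List (Fin 2)) (c : ℝ) :
    ∫ x, (Sw τ x - c) ^ 2 ∂P = sw τ ^ 2 * Var[id; P] + (Sw τ (2 / 3) - c) ^ 2 := by
  have hvar : Var[Sw τ; P] = sw τ ^ 2 * Var[id; P] := by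
    rw [funext (Sw_eq τ), variance_add_const (by fun_prop)]
    exact variance_const_mul _ _ _
  rw [integral_sq_sub_const (hP.memLp (continuous_Sw τ) 2), hP.integral_Sw, hP.mean_eq, hvar]

theorem variance_eq : Var[id; P] = 16 / 153 := by
  have h := hP.integral_eq (f := fun x => (x - 2 / 3) ^ 2) (by fun_prop)
  have hid : ∫ x, (x - 2 / 3) ^ 2 ∂P = Var[id; P] := by
    simpa [Sw, sw] using hP.integral_sq_Sw [] (2 / 3)
  rw [hid, hP.integral_sq_Sw, hP.integral_sq_Sw] at h
  norm_num [Sw, sw, S1, S2] at h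
  linarith

end Moments

/-! ### Truncated first moments and pairs of points -/

section TruncatedMoment

variable {t : ℝ}

section FiniteMeasure

variable [IsFiniteMeasure P]

theorem integral_max_const_sub_of_nonpos (ht : t ≤ 0) : ∫ x, max (t - x) 0 ∂P = 0 :=
  integral_eq_zero_of_ae <| hP.ae_mem_Icc.mono fun _ hx => max_eq_right (by linarith [hx.1])

theorem integral_max_const_sub_eq (t : ℝ) : ∫ x, max (t - x) 0 ∂P =
    1 / 16 * ∫ x, max (4 * t - x) 0 ∂P + 3 / 8 * ∫ x, max (2 * t - 1 - x) 0 ∂P := by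
  have h₁ (x : ℝ) : max (t - Sw [0] x) 0 = 1 / 4 * max (4 * t - x) 0 := by
    rw [mul_max_of_nonneg _ _ (by norm_num), mul_zero]
    simp only [Sw, S1, Function.comp_apply, id, if_pos]
    ring_nf
  have h₂ (x : ℝ) : max (t - Sw [1] x) 0 = 1 / 2 * max (2 * t - 1 - x) 0 := by
    rw [mul_max_of_nonneg _ _ (by norm_num), mul_zero]
    simp only [Sw, S2, Function.comp_apply, id, one_ne_zero, if_false]
    ring_nf
  rw [hP.integral_eq (f := fun x => max (t - x) 0) (by fun_prop)]
  simp_rw [h₁, h₂, integral_const_mul]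
  ring

end FiniteMeasure

variable [IsProbabilityMeasure P]

theorem integral_max_const_sub_le_div_three (ht₀ : 0 ≤ t) (ht₁ : t ≤ 1) :
    ∫ x, max (t - x) 0 ∂P ≤ t / 3 := by
  calc ∫ x, max (t - x) 0 ∂P ≤ ∫ x, t * (1 - id x) ∂P :=
        hP.integral_mono (by fun_prop) (by fun_prop) fun x hx =>
          max_le (by rw [id]; nlinarith [hx.1]) (mul_nonneg ht₀ (by simpa using hx.2))
    _ = t / 3 := by
        rw [integral_const_mul, integral_sub (integrable_const 1) (hP.integrable continuous_id),
          hP.mean_eq]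
        norm_num
        ring

theorem integral_max_const_sub_of_one_le (ht : 1 ≤ t) : ∫ x, max (t - x) 0 ∂P = t - 2 / 3 := by
  calc ∫ x, max (t - x) 0 ∂P = ∫ x, (t - id x) ∂P :=
        integral_congr_ae <| hP.ae_mem_Icc.mono fun x hx => max_eq_left (by linarith [hx.2])
    _ = t - 2 / 3 := by
        rw [integral_sub (integrable_const t) (hP.integrable continuous_id), hP.mean_eq]
        simp

theorem integral_max_const_sub_le_sq (t : ℝ) : ∫ x, max (t - x) 0 ∂P ≤ 3 / 8 * t ^ 2 := by
  have large {t : ℝ} (ht : 1 / 4 ≤ t) : ∫ x, max (t - x) 0 ∂P ≤ 3 / 8 * t ^ 2 := by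
    rcases le_total 1 t with h₁ | h₁
    · nlinarith [hP.integral_max_const_sub_of_one_le h₁, sq_nonneg (3 * t - 4)]
    have h₄ := hP.integral_max_const_sub_of_one_le (t := 4 * t) (by linarith)
    rw [hP.integral_max_const_sub_eq, h₄]
    rcases le_total t (1 / 2) with h₂ | h₂
    · rw [hP.integral_max_const_sub_of_nonpos (by linarith)]
      nlinarith [sq_nonneg (3 * t - 1)]
    · nlinarith [hP.integral_max_const_sub_le_div_three (t := 2 * t - 1) (by linarith)
        (by linarith), sq_nonneg (3 * t - 2)]
  have scaled (k : ℕ) : ∀ t, 1 / 4 ≤ 4 ^ k * t → ∫ x, max (t - x) 0 ∂P ≤ 3 / 8 * t ^ 2 := by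
    induction k with
    | zero => exact fun t ht => large (by simpa using ht)
    | succ k ih =>
      intro t ht
      rcases le_total (1 / 4) t with h | h
      · exact large h
      · -- The second term of the recursion vanishes and the first one scales like `t ^ 2`.
        have h₄ := ih (4 * t) (by rwa [← mul_assoc, ← pow_succ])
        rw [hP.integral_max_const_sub_eq, hP.integral_max_const_sub_of_nonpos (t := 2 * t - 1)
          (by linarith)]
        linarith
  rcases le_or_gt t 0 with ht | ht
  · rw [hP.integral_max_const_sub_of_nonpos ht]
    positivity
  · obtain ⟨k, hk⟩ := pow_unbounded_of_one_lt (1 / t) (show (1 : ℝ) < 4 by norm_num)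
    rw [div_lt_iff₀ ht] at hk
    exact scaled k t (by linarith)

theorem integral_max_mul_integral_max_lt_of_lt (ht : t < 1 / 4) :
    (∫ x, max (t - x) 0 ∂P) * ∫ x, max (x - t) 0 ∂P < 1 / 48 := by
  rw [integral_max_sub_const_eq (hP.integrable continuous_id), hP.mean_eq]
  rcases le_total t 0 with ht₀ | ht₀
  · rw [hP.integral_max_const_sub_of_nonpos ht₀]
    norm_num
  have hG₀ : 0 ≤ ∫ x, max (t - x) 0 ∂P := integral_nonneg fun x => le_max_right _ _
  have hG : ∫ x, max (t - x) 0 ∂P ≤ t / 12 := by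
    have h₄ := hP.integral_max_const_sub_le_div_three (t := 4 * t) (by linarith) (by linarith)
    rw [hP.integral_max_const_sub_eq, hP.integral_max_const_sub_of_nonpos (t := 2 * t - 1)
      (by linarith)]
    linarith
  nlinarith

theorem integral_max_mul_integral_max_lt_of_gt (ht : 1 / 2 < t) :
    (∫ x, max (t - x) 0 ∂P) * ∫ x, max (x - t) 0 ∂P < 1 / 48 := by
  rw [integral_max_sub_const_eq (hP.integrable continuous_id), hP.mean_eq]
  rcases le_total 1 t with ht₁ | ht₁
  · rw [hP.integral_max_const_sub_of_one_le ht₁]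
    norm_num
  obtain ⟨s, rfl⟩ : ∃ s, t = (s + 1) / 2 := ⟨2 * t - 1, by ring⟩
  have hg₀ : 0 ≤ ∫ x, max (s - x) 0 ∂P := integral_nonneg fun x => le_max_right _ _
  have hg := hP.integral_max_const_sub_le_sq s
  rw [hP.integral_max_const_sub_eq, hP.integral_max_const_sub_of_one_le (t := 4 * ((s + 1) / 2))
    (by linarith), show 2 * ((s + 1) / 2) - 1 = s by ring]
  set g := ∫ x, max (s - x) 0 ∂P
  have hs₀ : 0 < s := by linarith
  calc _ = (1 / 12 + s / 8 + 3 / 8 * g) * (1 / 4 - 3 / 8 * s + 3 / 8 * g) := by ring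
    _ ≤ (1 / 12 + s / 8 + 9 / 64 * s ^ 2) * ((4 - 3 * s) ^ 2 / 64) :=
        mul_le_mul_of_nonneg (by linarith) (by linarith) (by positivity) (by positivity)
    _ = 1 / 48 * (1 - 27 / 16 * s ^ 3 * (1 - 9 / 16 * s)) := by ring
    _ < 1 / 48 := by
        have hs₁ : 0 < 1 - 9 / 16 * s := by linarith
        have := mul_pos (pow_pos hs₀ 3) hs₁
        linarith

theorem lt_distortion_pair {a b : ℝ} (hab : a ≤ b) (h : a + b < 1 / 2 ∨ 1 < a + b) :
    13 / 64 * Var[id; P] < distortion P {a, b} := by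
  have hlt : (∫ x, max ((a + b) / 2 - x) 0 ∂P) * ∫ x, max (x - (a + b) / 2) 0 ∂P < 1 / 48 := by
    rcases h with h | h
    · exact hP.integral_max_mul_integral_max_lt_of_lt (by linarith)
    · exact hP.integral_max_mul_integral_max_lt_of_gt (by linarith)
  have hle := variance_sub_le_distortion_pair (hP.memLp continuous_id 2) hab
  linarith [hP.variance_eq]

end TruncatedMoment

/-! ### Distortion on cylinders and quantization errors -/

section CondDistortion

variable [IsFiniteMeasure P] {α β : Finset ℝ} (τ : List (Fin 2))

theorem condDistortion_eq (hα : α.Nonempty) :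
    condDistortion P α τ
      = 1 / 4 * condDistortion P α (τ ++ [0]) + 3 / 4 * condDistortion P α (τ ++ [1]) := by
  simp only [condDistortion, Sw_append]
  exact hP.integral_eq ((continuous_sqInfDist hα).comp (continuous_Sw τ))

theorem distortion_eq (hα : α.Nonempty) :
    distortion P α = 1 / 4 * condDistortion P α [0] + 3 / 4 * condDistortion P α [1] :=
  hP.condDistortion_eq [] hα

theorem distortion_eq_of_two_letters (hα : α.Nonempty) :
    distortion P α = 1 / 4 * condDistortion P α [0] + 3 / 16 * condDistortion P α [1, 0]
      + 9 / 16 * condDistortion P α [1, 1] := by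
  have h : condDistortion P α [1]
      = 1 / 4 * condDistortion P α [1, 0] + 3 / 4 * condDistortion P α [1, 1] :=
    hP.condDistortion_eq [1] hα
  rw [hP.distortion_eq hα, h]
  ring

theorem mul_condDistortion_append_zero_le (hα : α.Nonempty) :
    1 / 4 * condDistortion P α (τ ++ [0]) ≤ condDistortion P α τ := by
  linarith [hP.condDistortion_eq τ hα, condDistortion_nonneg (P := P) (α := α) (τ := τ ++ [1])]

theorem mul_condDistortion_append_one_le (hα : α.Nonempty) :
    3 / 4 * condDistortion P α (τ ++ [1]) ≤ condDistortion P α τ := by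
  linarith [hP.condDistortion_eq τ hα, condDistortion_nonneg (P := P) (α := α) (τ := τ ++ [0])]

theorem condDistortion_mono (hα : α.Nonempty) (hβ : β.Nonempty)
    (h : ∀ x ∈ J τ, sqInfDist β x ≤ sqInfDist α x) :
    condDistortion P β τ ≤ condDistortion P α τ :=
  hP.integral_mono ((continuous_sqInfDist hβ).comp (continuous_Sw τ))
    ((continuous_sqInfDist hα).comp (continuous_Sw τ)) fun _ hx => h _ (mem_image_of_mem _ hx)

theorem distortion_union_image_le (hα : α.Nonempty) (hβ : β.Nonempty) :
    distortion P (α.image (Sw [0]) ∪ β.image (Sw [1]))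
      ≤ 1 / 64 * distortion P α + 3 / 16 * distortion P β := by
  have hα' : (α.image (Sw [0])).Nonempty := hα.image _
  have hβ' : (β.image (Sw [1])).Nonempty := hβ.image _
  have hunion := hα'.mono (Finset.subset_union_left (s₂ := β.image (Sw [1])))
  have h₀ := hP.condDistortion_mono [0] hα' hunion fun x _ =>
    sqInfDist_anti hα' Finset.subset_union_left
  have h₁ := hP.condDistortion_mono [1] hβ' hunion fun x _ =>
    sqInfDist_anti hβ' Finset.subset_union_right
  rw [condDistortion_image] at h₀ h₁
  rw [hP.distortion_eq hunion]
  norm_num [sw] at h₀ h₁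
  linarith

theorem qError_add_le {k l : ℕ} (hk : 1 ≤ k) (hl : 1 ≤ l) :
    qError P (k + l) ≤ 1 / 64 * qError P k + 3 / 16 * qError P l := by
  have hle {β γ : Finset ℝ} (hβ : β.Nonempty) (hβk : β.card ≤ k) (hγ : γ.Nonempty)
      (hγl : γ.card ≤ l) :
      qError P (k + l) ≤ 1 / 64 * distortion P β + 3 / 16 * distortion P γ := by
    refine le_trans (qError_le_distortion ((hβ.image _).mono Finset.subset_union_left) ?_)
      (hP.distortion_union_image_le hβ hγ)
    exact (Finset.card_union_le _ _).trans
      (add_le_add (Finset.card_image_le.trans hβk) (Finset.card_image_le.trans hγl))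
  have hγ : ∀ γ : Finset ℝ, γ.Nonempty → γ.card ≤ l →
      64 * (qError P (k + l) - 3 / 16 * distortion P γ) ≤ qError P k := fun γ hγ hγl =>
    le_qError hk fun β hβ hβk => by linarith [hle hβ hβk hγ hγl]
  have hq : 16 / 3 * (qError P (k + l) - 1 / 64 * qError P k) ≤ qError P l :=
    le_qError hl fun γ hγ' hγl => by linarith [hγ γ hγ' hγl]
  linarith

end CondDistortion

section VarianceBounds

variable [IsProbabilityMeasure P] {α : Finset ℝ}

theorem condDistortion_singleton (τ : List (Fin 2)) (c : ℝ) :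
    condDistortion P {c} τ = sw τ ^ 2 * Var[id; P] + (Sw τ (2 / 3) - c) ^ 2 := by
  simp_rw [condDistortion, sqInfDist_singleton]
  exact hP.integral_sq_Sw τ c

theorem variance_add_sq_le_condDistortion (τ : List (Fin 2)) (hα : α.Nonempty) {c : ℝ}
    (h : ∀ x ∈ J τ, ∀ a ∈ α, (x - c) ^ 2 ≤ (x - a) ^ 2) :
    sw τ ^ 2 * Var[id; P] + (Sw τ (2 / 3) - c) ^ 2 ≤ condDistortion P α τ := by
  rw [← hP.condDistortion_singleton]
  refine hP.condDistortion_mono τ hα (Finset.singleton_nonempty c) fun x hx => ?_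
  rw [sqInfDist_singleton, le_sqInfDist_iff hα]
  exact h x hx

theorem qError_one_le : qError P 1 ≤ Var[id; P] := by
  have h := qError_le_distortion (μ := P) (Finset.singleton_nonempty P[id])
    (Finset.card_singleton _).le
  rwa [distortion_singleton (hP.memLp continuous_id 2), sub_self, zero_pow two_ne_zero,
    add_zero] at h

theorem qError_two_le : qError P 2 ≤ 13 / 64 * Var[id; P] := by
  linarith [hP.qError_add_le le_rfl le_rfl, hP.qError_one_le]

theorem qError_add_two_le {n : ℕ} (hn : 1 ≤ n) :
    qError P (n + 2) ≤ 19 / 1024 * Var[id; P] + 9 / 256 * qError P n := by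
  have h₁ := hP.qError_add_le le_rfl hn
  have h₂ := hP.qError_add_le le_rfl (hn.trans (Nat.le_add_left n 1))
  rw [show n + 2 = 1 + (1 + n) by ring]
  linarith [hP.qError_one_le]

theorem qError_three_le : qError P 3 ≤ 55 / 1024 * Var[id; P] := by
  linarith [hP.qError_add_two_le le_rfl, hP.qError_one_le]

end VarianceBounds

/-! ### A Voronoi cell across the gap -/

section Straddling

variable [IsProbabilityMeasure P] {α : Finset ℝ} {h l r : ℝ} {τ : List (Fin 2)}

theorem variance_add_sq_le_condDistortion_of_le (hs : Straddles α h l r) (hτ₀ : 2 * l - h ≤ Sw τ 0)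
    (hτ₁ : Sw τ 1 ≤ l) :
    sw τ ^ 2 * Var[id; P] + (Sw τ (2 / 3) - (2 * l - h)) ^ 2 ≤ condDistortion P α τ :=
  hP.variance_add_sq_le_condDistortion τ ⟨h, hs.mem⟩ fun _ hx =>
    hs.sq_sub_le_of_le (hτ₀.trans (J_subset_Icc τ hx).1) ((J_subset_Icc τ hx).2.trans hτ₁)

theorem variance_add_sq_le_condDistortion_of_ge (hs : Straddles α h l r) (hτ₀ : r ≤ Sw τ 0)
    (hτ₁ : Sw τ 1 ≤ 2 * r - h) :
    sw τ ^ 2 * Var[id; P] + (Sw τ (2 / 3) - (2 * r - h)) ^ 2 ≤ condDistortion P α τ :=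
  hP.variance_add_sq_le_condDistortion τ ⟨h, hs.mem⟩ fun _ hx =>
    hs.sq_sub_le_of_ge (hτ₀.trans (J_subset_Icc τ hx).1) ((J_subset_Icc τ hx).2.trans hτ₁)

theorem condDistortion_zero_ge (hs : Straddles α h (1 / 4) (1 / 2)) (hh : 1 / 2 ≤ h) :
    1 / 16 * Var[id; P] + (h - 1 / 3) ^ 2 ≤ condDistortion P α [0] := by
  convert hP.variance_add_sq_le_condDistortion_of_le (τ := [0]) hs ?_ ?_ using 1 <;>
    norm_num [Sw, sw, S1, S2]
  · ring
  · linarith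

theorem condDistortion_one_zero_ge (hs : Straddles α h (1 / 4) (1 / 2)) (hh : h ≤ 3 / 8) :
    1 / 64 * Var[id; P] + (5 / 12 - h) ^ 2 ≤ condDistortion P α [1, 0] := by
  convert hP.variance_add_sq_le_condDistortion_of_ge (τ := [1, 0]) hs ?_ ?_ using 1 <;>
    norm_num [Sw, sw, S1, S2]
  · ring
  · linarith

theorem condDistortion_zero_one_ge (hs : Straddles α h (1 / 4) (1 / 2)) (hh : 3 / 8 ≤ h) :
    1 / 64 * Var[id; P] + (h - 7 / 24) ^ 2 ≤ condDistortion P α [0, 1] := by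
  convert hP.variance_add_sq_le_condDistortion_of_le (τ := [0, 1]) hs ?_ ?_ using 1 <;>
    norm_num [Sw, sw, S1, S2]
  · ring
  · linarith

theorem condDistortion_zero_one_one_ge (hs : Straddles α h (1 / 4) (1 / 2)) (hh : 5 / 16 ≤ h) :
    1 / 256 * Var[id; P] + (h - 13 / 48) ^ 2 ≤ condDistortion P α [0, 1, 1] := by
  convert hP.variance_add_sq_le_condDistortion_of_le (τ := [0, 1, 1]) hs ?_ ?_ using 1 <;>
    norm_num [Sw, sw, S1, S2]
  · ring
  · linarith

theorem condDistortion_one_zero_zero_ge (hs : Straddles α h (1 / 4) (1 / 2)) (hh : h ≤ 15 / 32) :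
    1 / 1024 * Var[id; P] + (23 / 48 - h) ^ 2 ≤ condDistortion P α [1, 0, 0] := by
  convert hP.variance_add_sq_le_condDistortion_of_ge (τ := [1, 0, 0]) hs ?_ ?_ using 1 <;>
    norm_num [Sw, sw, S1, S2]
  · ring
  · linarith

theorem lt_condDistortion_of_straddles (hs : Straddles α h (1 / 4) (1 / 2)) :
    19 / 1024 * Var[id; P]
      < 1 / 4 * condDistortion P α [0] + 3 / 16 * condDistortion P α [1, 0] := by
  have hα : α.Nonempty := ⟨h, hs.mem⟩
  have h₀ : 0 ≤ condDistortion P α [0] := condDistortion_nonneg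
  have h₁₀ : 0 ≤ condDistortion P α [1, 0] := condDistortion_nonneg
  have h₀₁ : 3 / 4 * condDistortion P α [0, 1] ≤ condDistortion P α [0] :=
    hP.mul_condDistortion_append_one_le [0] hα
  have h₀₁₁ : 3 / 4 * condDistortion P α [0, 1, 1] ≤ condDistortion P α [0, 1] :=
    hP.mul_condDistortion_append_one_le [0, 1] hα
  have h₁₀₀ : 1 / 4 * condDistortion P α [1, 0, 0] ≤ condDistortion P α [1, 0] :=
    hP.mul_condDistortion_append_zero_le [1, 0] hα
  have hV := hP.variance_eq
  rcases le_total (1 / 2) h with hh | hh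
  · nlinarith [hP.condDistortion_zero_ge hs hh]
  rcases le_total h (5 / 16) with hh₁ | hh₁
  · nlinarith [hP.condDistortion_one_zero_ge hs (by linarith)]
  rcases le_total h (3 / 8) with hh₂ | hh₂
  · nlinarith [hP.condDistortion_one_zero_ge hs hh₂, hP.condDistortion_zero_one_one_ge hs hh₁,
      sq_nonneg (3 / 16 * (5 / 12 - h) - 9 / 64 * (h - 13 / 48))]
  have hb := hP.condDistortion_zero_one_ge hs hh₂
  rcases le_total h (2 / 5) with hh₃ | hh₃
  · nlinarith [hP.condDistortion_one_zero_zero_ge hs (by linarith)]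
  · nlinarith

end Straddling

section NotOptimal

variable [IsProbabilityMeasure P] {α : Finset ℝ} {h : ℝ}

theorem lt_half_of_straddles (hs : Straddles α h (1 / 4) (1 / 2))
    (hd : distortion P α ≤ 55 / 1024 * Var[id; P]) : h < 1 / 2 := by
  by_contra! hh
  have hα : α.Nonempty := ⟨h, hs.mem⟩
  have h₁ : 0 ≤ condDistortion P α [1] := condDistortion_nonneg
  nlinarith [hP.distortion_eq hα, hP.condDistortion_zero_ge hs hh, hP.variance_eq]

theorem exists_gt_le_one_of_straddles (hs : Straddles α h (1 / 4) (1 / 2))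
    (hd : distortion P α ≤ 55 / 1024 * Var[id; P]) : ∃ b ∈ α, h < b ∧ b ≤ 1 := by
  by_contra! hb
  have hα : α.Nonempty := ⟨h, hs.mem⟩
  have hh := hP.lt_half_of_straddles hs hd
  have h₁₁ : 1 / 16 * Var[id; P] + 1 / 144 ≤ condDistortion P α [1, 1] := by
    convert hP.variance_add_sq_le_condDistortion [1, 1] hα (c := 1) fun x hx a ha => ?_ using 1
    · norm_num [Sw, sw, S1, S2]
    have hx' := J_subset_Icc _ hx
    norm_num [Sw, S1, S2] at hx'
    rcases le_or_gt a h with hah | hah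
    · nlinarith
    · nlinarith [hb a ha hah]
  linarith [hP.distortion_eq_of_two_letters hα, hP.lt_condDistortion_of_straddles hs]

theorem exists_lt_of_straddles (hs : Straddles α h (1 / 4) (1 / 2))
    (hd : distortion P α ≤ 55 / 1024 * Var[id; P]) : ∃ a ∈ α, a < h := by
  by_contra! ha
  have hα : α.Nonempty := ⟨h, hs.mem⟩
  have h₀ : 1 / 16 * Var[id; P] + (1 / 6 - h) ^ 2 ≤ condDistortion P α [0] := by
    convert hP.variance_add_sq_le_condDistortion [0] hα (c := h) fun x hx a haα => ?_ using 1
    · norm_num [Sw, sw, S1, S2]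
    have hx' := J_subset_Icc _ hx
    norm_num [Sw, S1, S2] at hx'
    rcases (ha a haα).eq_or_lt with rfl | hah
    · exact le_rfl
    · nlinarith [hs.lt_add a haα hah]
  have h₁₀ : 0 ≤ condDistortion P α [1, 0] := condDistortion_nonneg
  have h₁₁ : 0 ≤ condDistortion P α [1, 1] := condDistortion_nonneg
  have hsum := hP.distortion_eq_of_two_letters hα
  have hV := hP.variance_eq
  rcases le_total h (3 / 8) with hh | hh
  · nlinarith [hP.condDistortion_one_zero_ge hs hh,
      sq_nonneg (1 / 4 * (h - 1 / 6) - 3 / 16 * (5 / 12 - h))]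
  · nlinarith

theorem qError_le_condDistortion_of_straddles (hs : Straddles α h (1 / 4) (1 / 2))
    (hd : distortion P α ≤ 55 / 1024 * Var[id; P]) :
    1 / 16 * qError P (α.card - 2) ≤ condDistortion P α [1, 1] := by
  have hα : α.Nonempty := ⟨h, hs.mem⟩
  have hh := hP.lt_half_of_straddles hs hd
  obtain ⟨a, ha, hah⟩ := hP.exists_lt_of_straddles hs hd
  obtain ⟨b, hb, hhb, hb₁⟩ := hP.exists_gt_le_one_of_straddles hs hd
  have hR : (α.filter (h < ·)).Nonempty := ⟨b, Finset.mem_filter.2 ⟨hb, hhb⟩⟩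
  have hcard : (α.filter (h < ·)).card ≤ α.card - 2 := by
    have hpair : ({a, h} : Finset ℝ) ⊆ α.filter (¬ h < ·) := by
      simp [Finset.insert_subset_iff, ha, hs.mem, hah.le]
    have hle := Finset.card_le_card hpair
    rw [Finset.card_pair hah.ne] at hle
    have hadd := Finset.card_filter_add_card_filter_not (s := α) (h < ·)
    omega
  have hserve : condDistortion P (α.filter (h < ·)) [1, 1] ≤ condDistortion P α [1, 1] := by
    refine hP.condDistortion_mono _ hα hR fun x hx => sqInfDist_filter_le hb hhb fun c _ hc => ?_
    have hx' := J_subset_Icc _ hx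
    norm_num [Sw, S1, S2] at hx'
    nlinarith [not_lt.1 hc]
  obtain ⟨β, hβ⟩ := exists_image_Sw_eq [1, 1] (α.filter (h < ·))
  rw [← hβ, Finset.image_nonempty] at hR
  rw [← hβ, card_image_Sw] at hcard
  rw [← hβ, condDistortion_image] at hserve
  norm_num [sw] at hserve
  linarith [qError_le_distortion (μ := P) hR hcard]

theorem not_straddles_of_isOptimal (hα : IsOptimal P α.card α) (hcard : 2 ≤ α.card) :
    ¬ Straddles α h (1 / 4) (1 / 2) := fun hs => by
  obtain ⟨hne, -, hopt⟩ := hα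
  rcases hcard.eq_or_lt with htwo | hthree
  · rw [← htwo] at hopt
    refine (hopt.trans_le hP.qError_two_le).not_gt ?_
    obtain ⟨b, hb, hbh⟩ := Finset.exists_mem_ne (htwo ▸ one_lt_two) h
    have hpair : α = {h, b} := (Finset.eq_of_subset_of_card_le
      (by simp [Finset.insert_subset_iff, hs.mem, hb])
      (by rw [Finset.card_pair hbh.symm, htwo])).symm
    rcases lt_or_gt_of_ne hbh with hlt | hlt
    · rw [hpair, Finset.pair_comm]
      exact hP.lt_distortion_pair hlt.le (.inl (by linarith [hs.add_lt b hb hlt]))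
    · rw [hpair]
      exact hP.lt_distortion_pair hlt.le (.inr (by linarith [hs.lt_add b hb hlt]))
  · have hd : distortion P α ≤ 55 / 1024 * Var[id; P] :=
      hopt.trans_le ((qError_anti (by norm_num) hthree).trans hP.qError_three_le)
    have hq := hP.qError_add_two_le (n := α.card - 2) (by omega)
    rw [Nat.sub_add_cancel hcard, ← hopt] at hq
    linarith [hP.distortion_eq_of_two_letters hne, hP.lt_condDistortion_of_straddles hs,
      hP.qError_le_condDistortion_of_straddles hs hd]

end NotOptimal

/-! ### Splitting of optimal sets -/

section Induction

variable [IsProbabilityMeasure P] {α : Finset ℝ}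

theorem exists_image_union_image_of_isOptimal (hα : IsOptimal P α.card α) (hcard : 2 ≤ α.card) :
    ∃ A B : Finset ℝ, α = A.image (Sw [0]) ∪ B.image (Sw [1]) ∧ A.card < α.card ∧
      B.card < α.card ∧ IsOptimal P A.card A ∧ IsOptimal P B.card B := by
  obtain ⟨hne, -, hopt⟩ := hα
  obtain ⟨A', B', hsplit⟩ | ⟨h, hs⟩ :=
    exists_splitsAcross_or_straddles hne (l := 1 / 4) (r := 1 / 2) (by norm_num)
  swap
  · exact absurd hs (hP.not_straddles_of_isOptimal ⟨hne, le_rfl, hopt⟩ hcard)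
  obtain ⟨A, rfl⟩ := exists_image_Sw_eq [0] A'
  obtain ⟨B, rfl⟩ := exists_image_Sw_eq [1] B'
  have h₀ := hP.condDistortion_mono [0] hne hsplit.left_nonempty fun x hx =>
    hsplit.left_le x ((J_subset_Icc _ hx).2.trans_eq (by norm_num [Sw, S1]))
  have h₁ := hP.condDistortion_mono [1] hne hsplit.right_nonempty fun x hx =>
    hsplit.right_le x ((J_subset_Icc _ hx).1.trans_eq' (by norm_num [Sw, S2]))
  have hA : A.Nonempty := Finset.image_nonempty.1 hsplit.left_nonempty
  have hB : B.Nonempty := Finset.image_nonempty.1 hsplit.right_nonempty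
  have hadd := hsplit.card_add_card
  rw [card_image_Sw, card_image_Sw] at hadd
  rw [condDistortion_image] at h₀ h₁
  norm_num [sw] at h₀ h₁
  have hq := hP.qError_add_le hA.card_pos hB.card_pos
  rw [hadd, ← hopt, hP.distortion_eq hne] at hq
  have hqA := qError_le_distortion (μ := P) hA le_rfl
  have hqB := qError_le_distortion (μ := P) hB le_rfl
  have hA₁ := hA.card_pos
  have hB₁ := hB.card_pos
  exact ⟨A, B, hsplit.union_eq.symm, by omega, by omega, ⟨hA, le_rfl, by linarith⟩,
    ⟨hB, le_rfl, by linarith⟩⟩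

theorem eq_of_isOptimal_one {a : ℝ} (h : IsOptimal P 1 {a}) : a = 2 / 3 := by
  have hle := h.2.2.trans_le hP.qError_one_le
  rw [distortion_singleton (hP.memLp continuous_id 2), hP.mean_eq] at hle
  nlinarith [sq_nonneg (2 / 3 - a)]

theorem exists_eq_Sw_of_isOptimal (hα : IsOptimal P α.card α) {c : ℝ} (hc : c ∈ α) :
    ∃ τ, c = Sw τ (2 / 3) := by
  induction hn : α.card using Nat.strong_induction_on generalizing α c with
  | _ n ih =>
  subst hn
  rcases Nat.eq_or_lt_of_le hα.1.card_pos with hone | htwo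
  · obtain ⟨a, rfl⟩ := Finset.card_eq_one.1 hone.symm
    exact ⟨[], (Finset.mem_singleton.1 hc).trans (hP.eq_of_isOptimal_one hα)⟩
  · obtain ⟨A, B, rfl, hAcard, hBcard, hA, hB⟩ :=
      hP.exists_image_union_image_of_isOptimal hα htwo
    rcases Finset.mem_union.1 hc with hc | hc <;> obtain ⟨d, hd, rfl⟩ := Finset.mem_image.1 hc
    · obtain ⟨τ, rfl⟩ := ih _ hAcard hA hd rfl
      exact ⟨0 :: τ, rfl⟩
    · obtain ⟨τ, rfl⟩ := ih _ hBcard hB hd rfl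
      exact ⟨1 :: τ, rfl⟩

end Induction

end SelfSimilar

theorem stmt_17 (P : Measure ℝ) [IsProbabilityMeasure P] (hP : SelfSimilar P)
    (n : ℕ) (hn : 2 ≤ n) (α : Finset ℝ) (hα : IsOptimal P n α) :
    ∀ c ∈ α, ∃ τ : List (Fin 2), c = Sw τ (2 / 3) :=
  fun _ hc => hP.exists_eq_Sw_of_isOptimal hα.isOptimal_card hc
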